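/- arXiv:1512.04680 — 2 statements merged into one kernel-verified Lean document; each statement's English description precedes it below -/
import Mathlib

section
/- For every r ≥ 0, one cycle of the cyclic BCPG iteration decreases the objective by at least the weighted squared block movement: f(x^{(r)}) − f(x^{(r+1)}) ≥ Σ_{k=1}^K (P_k/2) ‖x_k^{(r+1)} − x_k^{(r)}‖². -/
open Finset

/-- Squared Euclidean norm of a vector in `ℝ^n`. -/
noncomputable def sqnorm {n : ℕ} (v : Fin n → ℝ) : ℝ := ∑ i, v i ^ 2

/-- Euclidean inner product on `ℝ^n`. -/
noncomputable def dotp {n : ℕ} (u v : Fin n → ℝ) : ℝ := ∑ i, u i * v i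

/-- `λ_max(AᵀA)` for a real matrix `A`, characterized as the maximum of `‖Av‖²`
over unit vectors `v`. -/
noncomputable def lamMaxQ {M N : ℕ} (A : Matrix (Fin M) (Fin N) ℝ) : ℝ :=
  sSup {r : ℝ | ∃ v : Fin N → ℝ, sqnorm v = 1 ∧ r = sqnorm (A.mulVec v)}

/-- `λ_min(AᵀA)` for a real matrix `A`, characterized as the minimum of `‖Av‖²`
over unit vectors `v`. -/
noncomputable def lamMinQ {M N : ℕ} (A : Matrix (Fin M) (Fin N) ℝ) : ℝ :=
  sInf {r : ℝ | ∃ v : Fin N → ℝ, sqnorm v = 1 ∧ r = sqnorm (A.mulVec v)}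

/-- `λ_max(AᵀA)` for the concatenated matrix `A = [A_1 ⋯ A_K]`, acting on block
vectors. -/
noncomputable def lamMaxBlock {K M N : ℕ} (A : Fin K → Matrix (Fin M) (Fin N) ℝ) : ℝ :=
  sSup {r : ℝ | ∃ v : Fin K → Fin N → ℝ, (∑ k, sqnorm (v k)) = 1 ∧
    r = sqnorm (∑ k, (A k).mulVec (v k))}

/-- Maximum of a finite family of reals indexed by `Fin K`, `K ≥ 1`. -/
noncomputable def maxOf {K : ℕ} (hK : 1 ≤ K) (P : Fin K → ℝ) : ℝ :=
  Finset.univ.sup' (Finset.univ_nonempty_iff.mpr ⟨⟨0, hK⟩⟩) P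

/-- Minimum of a finite family of reals indexed by `Fin K`, `K ≥ 1`. -/
noncomputable def minOf {K : ℕ} (hK : 1 ≤ K) (P : Fin K → ℝ) : ℝ :=
  Finset.univ.inf' (Finset.univ_nonempty_iff.mpr ⟨⟨0, hK⟩⟩) P

/-- The residual `Σ_k A_k x_k − b`. -/
noncomputable def resid {K M N : ℕ} (A : Fin K → Matrix (Fin M) (Fin N) ℝ)
    (b : Fin M → ℝ) (x : Fin K → Fin N → ℝ) : Fin M → ℝ :=
  (∑ k, (A k).mulVec (x k)) - b

/-- The smooth part `g(x) = (1/2)‖Σ_k A_k x_k − b‖²`. -/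
noncomputable def gq {K M N : ℕ} (A : Fin K → Matrix (Fin M) (Fin N) ℝ)
    (b : Fin M → ℝ) (x : Fin K → Fin N → ℝ) : ℝ :=
  (1 / 2) * sqnorm (resid A b x)

/-- The objective `f(x) = g(x) + Σ_k h_k(x_k)`. -/
noncomputable def fq {K M N : ℕ} (A : Fin K → Matrix (Fin M) (Fin N) ℝ)
    (b : Fin M → ℝ) (h : Fin K → (Fin N → ℝ) → ℝ) (x : Fin K → Fin N → ℝ) : ℝ :=
  gq A b x + ∑ k, h k (x k)

/-- The partial gradient `∇_k g(x) = A_kᵀ (Σ_j A_j x_j − b)`. -/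
noncomputable def gradk {K M N : ℕ} (A : Fin K → Matrix (Fin M) (Fin N) ℝ)
    (b : Fin M → ℝ) (x : Fin K → Fin N → ℝ) (k : Fin K) : Fin N → ℝ :=
  ((A k).transpose).mulVec (resid A b x)

/-- The intermediate point `w_k^{(r+1)}` of the cycle: blocks `j < k` come from
`x^{(r+1)} = xp`, the remaining blocks from `x^{(r)} = x`. -/
def wpt {K N : ℕ} (x xp : Fin K → Fin N → ℝ) (k : Fin K) : Fin K → Fin N → ℝ :=
  fun j => if j < k then xp j else x j

/-- The objective of the `k`-th BCPG prox subproblem at the point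
`w_k^{(r+1)} = wpt x xp k`, evaluated at candidate block `y`. -/
noncomputable def bcpgObj {K M N : ℕ} (A : Fin K → Matrix (Fin M) (Fin N) ℝ)
    (b : Fin M → ℝ) (h : Fin K → (Fin N → ℝ) → ℝ) (P : Fin K → ℝ)
    (x xp : Fin K → Fin N → ℝ) (k : Fin K) (y : Fin N → ℝ) : ℝ :=
  dotp (gradk A b (wpt x xp k) k) (y - x k) + (P k / 2) * sqnorm (y - x k) + h k y

/-- One cycle of cyclic BCPG: `xp = x^{(r+1)}` is obtained from `x = x^{(r)}`
by letting, for `k = 1,…,K`, the `k`-th block minimize the prox subproblem at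
`w_k^{(r+1)}` over `X_k`. -/
def BCPGStep {K M N : ℕ} (A : Fin K → Matrix (Fin M) (Fin N) ℝ)
    (b : Fin M → ℝ) (h : Fin K → (Fin N → ℝ) → ℝ)
    (X : Fin K → Set (Fin N → ℝ)) (P : Fin K → ℝ)
    (x xp : Fin K → Fin N → ℝ) : Prop :=
  ∀ k : Fin K, xp k ∈ X k ∧ ∀ y ∈ X k,
    bcpgObj A b h P x xp k (xp k) ≤ bcpgObj A b h P x xp k y

/-- One cycle of cyclic exact BCD: `xp = x^{(r+1)}` is obtained from
`x = x^{(r)}` by letting, for `k = 1,…,K`, the `k`-th block minimize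
`f(x_1^{(r+1)},…,x_{k−1}^{(r+1)}, ·, x_{k+1}^{(r)},…,x_K^{(r)})` over `X_k`. -/
def BCDStep {K M N : ℕ} (A : Fin K → Matrix (Fin M) (Fin N) ℝ)
    (b : Fin M → ℝ) (h : Fin K → (Fin N → ℝ) → ℝ)
    (X : Fin K → Set (Fin N → ℝ))
    (x xp : Fin K → Fin N → ℝ) : Prop :=
  ∀ k : Fin K, xp k ∈ X k ∧ ∀ y ∈ X k,
    fq A b h (Function.update (wpt x xp k) k (xp k)) ≤
      fq A b h (Function.update (wpt x xp k) k y)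

lemma sqnorm_mulVec_bound {M N : ℕ} (A : Matrix (Fin M) (Fin N) ℝ) (v : Fin N → ℝ) :
    sqnorm (A.mulVec v) ≤ (∑ i, ∑ j, A i j ^ 2) * sqnorm v := by
  unfold sqnorm
  rw [Finset.sum_mul]
  apply Finset.sum_le_sum
  intro i _
  simp only [Matrix.mulVec, dotProduct]
  exact Finset.sum_mul_sq_le_sq_mul_sq _ _ _

lemma sqnorm_nonneg' {n : ℕ} (v : Fin n → ℝ) : 0 ≤ sqnorm v :=
  Finset.sum_nonneg fun i _ => sq_nonneg _

lemma sqnorm_smul' {n : ℕ} (c : ℝ) (v : Fin n → ℝ) : sqnorm (c • v) = c ^ 2 * sqnorm v := by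
  simp only [sqnorm, Finset.mul_sum, Pi.smul_apply, smul_eq_mul, mul_pow]

lemma dotp_smul' {n : ℕ} (c : ℝ) (u v : Fin n → ℝ) : dotp u (c • v) = c * dotp u v := by
  simp only [dotp, Finset.mul_sum, Pi.smul_apply, smul_eq_mul]
  exact Finset.sum_congr rfl fun i _ => by ring

lemma sqnorm_add' {n : ℕ} (u v : Fin n → ℝ) :
    sqnorm (u + v) = sqnorm u + 2 * dotp u v + sqnorm v := by
  simp only [sqnorm, dotp, Finset.mul_sum, ← Finset.sum_add_distrib, Pi.add_apply]
  exact Finset.sum_congr rfl fun i _ => by ring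

lemma dotp_transpose' {M N : ℕ} (A : Matrix (Fin M) (Fin N) ℝ) (u : Fin M → ℝ) (v : Fin N → ℝ) :
    dotp (A.transpose.mulVec u) v = dotp u (A.mulVec v) := by
  change dotProduct (A.transpose.mulVec u) v = dotProduct u (A.mulVec v)
  rw [Matrix.mulVec_transpose, Matrix.dotProduct_mulVec]

lemma sqnorm_mulVec_le {M N : ℕ} (A : Matrix (Fin M) (Fin N) ℝ) (v : Fin N → ℝ) :
    sqnorm (A.mulVec v) ≤ lamMaxQ A * sqnorm v := by
  rcases (sqnorm_nonneg' v).eq_or_lt with h0 | hpos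
  · have := sqnorm_mulVec_bound A v
    rw [← h0] at this ⊢
    simpa using this
  · have hs : 0 < Real.sqrt (sqnorm v) := Real.sqrt_pos.mpr hpos
    have hsq : Real.sqrt (sqnorm v) ^ 2 = sqnorm v := Real.sq_sqrt hpos.le
    have hle : sqnorm (A.mulVec ((Real.sqrt (sqnorm v))⁻¹ • v)) ≤ lamMaxQ A := by
      apply le_csSup
      · refine ⟨∑ i, ∑ j, A i j ^ 2, ?_⟩
        rintro r ⟨w, hw, rfl⟩
        simpa [hw] using sqnorm_mulVec_bound A w
      · refine ⟨_, ?_, rfl⟩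
        rw [sqnorm_smul', inv_pow, hsq]
        exact inv_mul_cancel₀ hpos.ne'
    rw [Matrix.mulVec_smul, sqnorm_smul', inv_pow, hsq] at hle
    rwa [inv_mul_le_iff₀ hpos, mul_comm] at hle

lemma lin_limit {a c : ℝ} (H : ∀ t : ℝ, 0 < t → t ≤ 1 → a ≤ t * c) : a ≤ 0 := by
  by_contra! ha
  have h1 := H 1 one_pos le_rfl
  have hc : 0 < c := by linarith
  have h2 := H (a / (2 * c)) (by positivity) (by rw [div_le_one (by positivity)]; linarith)
  have : a / (2 * c) * c = a / 2 := by field_simp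
  linarith

lemma block_vi {K M N : ℕ}
    (A : Fin K → Matrix (Fin M) (Fin N) ℝ) (b : Fin M → ℝ)
    (X : Fin K → Set (Fin N → ℝ)) (h : Fin K → (Fin N → ℝ) → ℝ)
    (hXcv : ∀ k, Convex ℝ (X k))
    (hhcv : ∀ k, ConvexOn ℝ Set.univ (h k)) (P : Fin K → ℝ)
    (x xp : Fin K → Fin N → ℝ) (hx : ∀ k, x k ∈ X k)
    (hstep : BCPGStep A b h X P x xp) (k : Fin K) :
    dotp (gradk A b (wpt x xp k) k) (xp k - x k) + P k * sqnorm (xp k - x k)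
      + h k (xp k) - h k (x k) ≤ 0 := by
  obtain ⟨hm, hopt⟩ := hstep k
  apply lin_limit (c := P k / 2 * sqnorm (xp k - x k))
  intro t ht ht1
  have hy := hopt _ (hXcv k hm (hx k) (sub_nonneg.mpr ht1) ht.le (by ring))
  have hc := (hhcv k).2 (Set.mem_univ (xp k)) (Set.mem_univ (x k))
    (sub_nonneg.mpr ht1) ht.le (by ring)
  have e : (1 - t) • xp k + t • x k - x k = (1 - t) • (xp k - x k) := by module
  simp only [bcpgObj, e, dotp_smul', sqnorm_smul'] at hy
  simp only [smul_eq_mul] at hc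
  generalize dotp (gradk A b (wpt x xp k) k) (xp k - x k) = D at *
  generalize sqnorm (xp k - x k) = S at *
  have := le_trans hy (add_le_add_right hc _)
  refine le_of_mul_le_mul_left ?_ ht
  nlinarith

/-- intermediate points indexed by naturals -/
def wnat {K N : ℕ} (x xp : Fin K → Fin N → ℝ) (n : ℕ) : Fin K → Fin N → ℝ :=
  fun j => if j.val < n then xp j else x j

lemma resid_succ {K M N : ℕ}
    (A : Fin K → Matrix (Fin M) (Fin N) ℝ) (b : Fin M → ℝ)
    (x xp : Fin K → Fin N → ℝ) (k : Fin K) :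
    resid A b (wnat x xp (k + 1)) =
      resid A b (wnat x xp k) + (A k).mulVec (xp k - x k) := by
  have : ∑ j, (A j).mulVec (wnat x xp (k + 1) j) - ∑ j, (A j).mulVec (wnat x xp k j)
      = (A k).mulVec (xp k - x k) := by
    rw [← Finset.sum_sub_distrib, Finset.sum_eq_single k]
    · simp [wnat, Matrix.mulVec_sub]
    · intro j _ hj
      have : (j.val < k.val + 1) ↔ (j.val < k.val) := by
        have := Fin.val_ne_of_ne hj
        omega
      simp [wnat, this]
    · simp
  unfold resid
  rw [← this]
  abel

/-- Lemma 1, sufficient descent of cyclic BCPG: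
`f(x^{(r)}) − f(x^{(r+1)}) ≥ Σ_k (P_k/2)‖x_k^{(r+1)} − x_k^{(r)}‖²`. -/
theorem bcpg_sufficient_descent {K M N : ℕ} (hK : 1 ≤ K) (hM : 1 ≤ M) (hN : 1 ≤ N)
    (A : Fin K → Matrix (Fin M) (Fin N) ℝ) (b : Fin M → ℝ)
    (X : Fin K → Set (Fin N → ℝ)) (h : Fin K → (Fin N → ℝ) → ℝ)
    (hXne : ∀ k, (X k).Nonempty) (hXcl : ∀ k, IsClosed (X k))
    (hXcv : ∀ k, Convex ℝ (X k))
    (hhcv : ∀ k, ConvexOn ℝ Set.univ (h k))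
    (hhlsc : ∀ k, LowerSemicontinuous (h k))
    (P : Fin K → ℝ) (hP : ∀ k, lamMaxQ (A k) ≤ P k)
    (x xp : Fin K → Fin N → ℝ) (hx : ∀ k, x k ∈ X k)
    (hstep : BCPGStep A b h X P x xp) :
    ∑ k, (P k / 2) * sqnorm (xp k - x k) ≤ fq A b h x - fq A b h xp := by
  have key : ∀ k : Fin K, (P k / 2) * sqnorm (xp k - x k) ≤
      (h k (x k) - h k (xp k)) -
        (gq A b (wnat x xp (k.val + 1)) - gq A b (wnat x xp k.val)) := by
    intro k
    have h1 := block_vi A b X h hXcv hhcv P x xp hx hstep k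
    have h2 := sqnorm_mulVec_le (A k) (xp k - x k)
    have h3 := mul_le_mul_of_nonneg_right (hP k) (sqnorm_nonneg' (xp k - x k))
    have e : wpt x xp k = wnat x xp k.val := rfl
    rw [e, gradk, dotp_transpose'] at h1
    simp only [gq, resid_succ, sqnorm_add']
    linarith
  have hsum := Finset.sum_le_sum fun k (_ : k ∈ (Finset.univ : Finset (Fin K))) => key k
  rw [Finset.sum_sub_distrib, Finset.sum_sub_distrib,
    Fin.sum_univ_eq_sum_range (fun n => gq A b (wnat x xp (n + 1)) - gq A b (wnat x xp n)),
    Finset.sum_range_sub (fun n => gq A b (wnat x xp n))] at hsum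
  have e0 : wnat x xp 0 = x := by funext j; simp [wnat]
  have eK : wnat x xp K = xp := by funext j; simp [wnat]
  rw [e0, eK] at hsum
  unfold fq
  linarith
end

section
/- For every r ≥ 0, one cycle of the cyclic exact BCD iteration decreases the objective by at least half the squared A-weighted block movement: f(x^{(r)}) − f(x^{(r+1)}) ≥ (1/2) Σ_{k=1}^K ‖A_k (x_k^{(r+1)} − x_k^{(r)})‖². -/
open Finset

lemma resid_combo {K M N : ℕ} (A : Fin K → Matrix (Fin M) (Fin N) ℝ) (b : Fin M → ℝ)
    (p q : Fin K → Fin N → ℝ) (t : ℝ) :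
    resid A b ((1 - t) • p + t • q) = (1 - t) • resid A b p + t • resid A b q := by
  have : ∀ k, (A k).mulVec (((1 - t) • p + t • q) k)
      = (1 - t) • (A k).mulVec (p k) + t • (A k).mulVec (q k) := by
    intro k
    simp [Matrix.mulVec_add, Matrix.mulVec_smul]
  unfold resid
  simp only [this, Finset.sum_add_distrib, ← Finset.smul_sum]
  module

lemma sqnorm_combo {n : ℕ} (u v : Fin n → ℝ) (t : ℝ) :
    sqnorm ((1 - t) • u + t • v)
      = (1 - t) * sqnorm u + t * sqnorm v - t * (1 - t) * sqnorm (v - u) := by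
  unfold sqnorm
  simp only [Finset.mul_sum, ← Finset.sum_add_distrib, ← Finset.sum_sub_distrib]
  refine Finset.sum_congr rfl fun i _ => ?_
  simp
  ring

lemma fq_combo {K M N : ℕ} (A : Fin K → Matrix (Fin M) (Fin N) ℝ) (b : Fin M → ℝ)
    (h : Fin K → (Fin N → ℝ) → ℝ) (hhcv : ∀ k, ConvexOn ℝ Set.univ (h k))
    (p q : Fin K → Fin N → ℝ) (t : ℝ) (h0 : 0 ≤ t) (h1 : t ≤ 1) :
    fq A b h ((1 - t) • p + t • q) ≤ (1 - t) * fq A b h p + t * fq A b h q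
      - t * (1 - t) / 2 * sqnorm (resid A b q - resid A b p) := by
  unfold fq gq
  rw [resid_combo, sqnorm_combo]
  have : ∑ k, h k (((1 - t) • p + t • q) k)
      ≤ (1 - t) * ∑ k, h k (p k) + t * ∑ k, h k (q k) := by
    rw [Finset.mul_sum, Finset.mul_sum, ← Finset.sum_add_distrib]
    refine Finset.sum_le_sum fun k _ => ?_
    exact (hhcv k).2 (Set.mem_univ (p k)) (Set.mem_univ (q k)) (by linarith) h0 (by ring)
  linarith

lemma resid_update_sub {K M N : ℕ} (A : Fin K → Matrix (Fin M) (Fin N) ℝ) (b : Fin M → ℝ)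
    (w : Fin K → Fin N → ℝ) (k : Fin K) (y z : Fin N → ℝ) :
    resid A b (Function.update w k y) - resid A b (Function.update w k z)
      = (A k).mulVec (y - z) := by
  unfold resid
  rw [sub_sub_sub_cancel_right, ← Finset.sum_sub_distrib, Finset.sum_eq_single k]
  · simp [Matrix.mulVec_sub]
  · intro j _ hj
    simp [Function.update_of_ne hj]
  · simp

lemma block_descent {K M N : ℕ} (A : Fin K → Matrix (Fin M) (Fin N) ℝ) (b : Fin M → ℝ)
    (X : Fin K → Set (Fin N → ℝ)) (h : Fin K → (Fin N → ℝ) → ℝ)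
    (hXcv : ∀ k, Convex ℝ (X k)) (hhcv : ∀ k, ConvexOn ℝ Set.univ (h k))
    (w : Fin K → Fin N → ℝ) (k : Fin K) (y z : Fin N → ℝ) (hy : y ∈ X k) (hz : z ∈ X k)
    (hmin : ∀ v ∈ X k, fq A b h (Function.update w k z) ≤ fq A b h (Function.update w k v)) :
    (1 / 2) * sqnorm ((A k).mulVec (z - y))
      ≤ fq A b h (Function.update w k y) - fq A b h (Function.update w k z) := by
  have hs : sqnorm ((A k).mulVec (z - y)) = sqnorm ((A k).mulVec (y - z)) := by
    rw [← neg_sub y z, Matrix.mulVec_neg]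
    simp [sqnorm]
  rw [hs]
  have key : ∀ t : ℝ, 0 < t → t ≤ 1 → (1 - t) / 2 * sqnorm ((A k).mulVec (y - z))
      ≤ fq A b h (Function.update w k y) - fq A b h (Function.update w k z) := by
    intro t h0 h1
    have e : (1 - t) • Function.update w k z + t • Function.update w k y
        = Function.update w k ((1 - t) • z + t • y) := by
      funext j
      by_cases hj : j = k
      · subst hj; simp
      · simp only [Pi.add_apply, Pi.smul_apply, Function.update_of_ne hj]; module
    have c := fq_combo A b h hhcv (Function.update w k z) (Function.update w k y) t h0.le h1
    rw [e, resid_update_sub] at c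
    have m := hmin _ (hXcv k hz hy (by linarith : 0 ≤ 1 - t) h0.le (by ring))
    have : t * ((1 - t) / 2 * sqnorm ((A k).mulVec (y - z)))
      ≤ t * (fq A b h (Function.update w k y) - fq A b h (Function.update w k z)) := by
      linarith
    exact le_of_mul_le_mul_left this h0
  have lim : Filter.Tendsto (fun t : ℝ => (1 - t) / 2 * sqnorm ((A k).mulVec (y - z)))
      (nhdsWithin 0 (Set.Ioi 0)) (nhds ((1 - 0) / 2 * sqnorm ((A k).mulVec (y - z)))) :=
    (Continuous.tendsto (by fun_prop) 0).mono_left nhdsWithin_le_nhds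
  rw [sub_zero] at lim
  refine le_of_tendsto lim ?_
  filter_upwards [Ioc_mem_nhdsGT (zero_lt_one' ℝ)] with t ht
  exact key t ht.1 ht.2

/-- Lemma 3, sufficient descent of cyclic exact BCD:
`f(x^{(r)}) − f(x^{(r+1)}) ≥ (1/2) Σ_k ‖A_k(x_k^{(r+1)} − x_k^{(r)})‖²`. -/
theorem bcd_sufficient_descent {K M N : ℕ} (hK : 1 ≤ K) (hM : 1 ≤ M) (hN : 1 ≤ N)
    (A : Fin K → Matrix (Fin M) (Fin N) ℝ) (b : Fin M → ℝ)
    (X : Fin K → Set (Fin N → ℝ)) (h : Fin K → (Fin N → ℝ) → ℝ)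
    (hXne : ∀ k, (X k).Nonempty) (hXcl : ∀ k, IsClosed (X k))
    (hXcv : ∀ k, Convex ℝ (X k))
    (hhcv : ∀ k, ConvexOn ℝ Set.univ (h k))
    (hhlsc : ∀ k, LowerSemicontinuous (h k))
    (x xp : Fin K → Fin N → ℝ) (hx : ∀ k, x k ∈ X k)
    (hstep : BCDStep A b h X x xp) :
    (1 / 2) * ∑ k, sqnorm ((A k).mulVec (xp k - x k)) ≤ fq A b h x - fq A b h xp := by
  let W : ℕ → Fin K → Fin N → ℝ := fun n j => if j.val < n then xp j else x j
  have hW0 : W 0 = x := by funext j; simp [W]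
  have hWK : W K = xp := by funext j; simp [W]
  have tel : ∑ k : Fin K, (fq A b h (W k.val) - fq A b h (W (k.val + 1)))
      = fq A b h x - fq A b h xp := by
    rw [Fin.sum_univ_eq_sum_range (fun n => fq A b h (W n) - fq A b h (W (n + 1))) K,
      Finset.sum_range_sub', hW0, hWK]
  rw [← tel, Finset.mul_sum]
  refine Finset.sum_le_sum fun k _ => ?_
  have e1 : W k.val = Function.update (wpt x xp k) k (x k) := by
    funext j
    by_cases hj : j = k
    · subst hj; simp [W]
    · simp only [W, Function.update_of_ne hj, wpt, Fin.lt_def]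
  have e2 : W (k.val + 1) = Function.update (wpt x xp k) k (xp k) := by
    funext j
    by_cases hj : j = k
    · subst hj; simp [W]
    · have hne : j.val ≠ k.val := fun hh => hj (Fin.ext hh)
      have : j.val < k.val + 1 ↔ j.val < k.val := by omega
      simp only [W, Function.update_of_ne hj, wpt, Fin.lt_def, this]
  rw [e1, e2]
  exact block_descent A b X h hXcv hhcv _ k _ _ (hx k) (hstep k).1 (hstep k).2
end
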